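/- arXiv:2101.05373 — 2 statements merged into one kernel-verified Lean document; each statement's English description precedes it below -/
import Mathlib

section
/- Fix η ≥ 1. For every sequence (Σ_n) where Σ_n is an n×n real positive-definite matrix, the limit as n → ∞ of ( Vol(T_η^{(n)}(Σ_n)) / ((2πe)^{n/2}(det Σ_n)^{1/2}) )^{2/n} equals 1 + η. -/
open Matrix MeasureTheory

/-!
For `η ≥ 1` the lower constraint in the typical set excludes at most the origin, so up to a null
set the typical set is the ellipsoid `aᵀ Σ⁻¹ a < n (1 + η)`. A linear change of variables by the
square root of `Σ⁻¹` gives its volume `√(det Σ) (π n (1 + η))^(n/2) / Γ(n/2 + 1)`. The `2/n`-th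
power of the ratio is then `(1 + η) e⁻¹ x / Γ(x + 1)^(1/x)` with `x = n/2`, whatever `Σ` is, and
the elementary bounds `x^x e^(-x) ≤ Γ(x + 1) ≤ (x + 1)^(x + 1) e^(-x)` replace Stirling's formula:
they already give `Γ(x + 1)^(1/x) / x → e⁻¹`.
-/

section GammaAsymptotics

open Real Set Filter Topology

lemma rpow_self_mul_exp_neg_le_Gamma_add_one {x : ℝ} (hx : 0 ≤ x) :
    x ^ x * exp (-x) ≤ Gamma (x + 1) := by
  have hint := GammaIntegral_convergent (show 0 < x + 1 by positivity)
  have hsub : Ioi x ⊆ Ioi 0 := Ioi_subset_Ioi hx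
  calc x ^ x * exp (-x) = ∫ t in Ioi x, exp (-t) * x ^ x := by
        rw [integral_mul_const, integral_exp_neg_Ioi, mul_comm]
    _ ≤ ∫ t in Ioi x, exp (-t) * t ^ (x + 1 - 1) := by
        refine setIntegral_mono_on ((integrableOn_exp_neg_Ioi x).mul_const _)
          (hint.mono_set hsub) measurableSet_Ioi fun t (ht : x < t) ↦ ?_
        rw [add_sub_cancel_right]
        gcongr
    _ ≤ ∫ t in Ioi 0, exp (-t) * t ^ (x + 1 - 1) := by
        refine setIntegral_mono_set hint ?_ hsub.eventuallyLE
        exact ae_restrict_of_forall_mem measurableSet_Ioi fun t (ht : 0 < t) ↦ by positivity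
    _ = Gamma (x + 1) := (Gamma_eq_integral (by positivity)).symm

/-- Split off the rate `1 / (x + 1)` from `exp (-t)`: the remaining factor
`exp (-t * x / (x + 1)) * t ^ x` is maximal at `t = x + 1`. -/
lemma exp_neg_mul_rpow_le_exp_neg_inv_mul {x t : ℝ} (hx : 0 ≤ x) (ht : 0 ≤ t) :
    exp (-t) * t ^ x ≤ exp (-(x + 1)⁻¹ * t) * ((x + 1) ^ x * exp (-x)) := by
  have tangent : t / (x + 1) ≤ exp (t / (x + 1) - 1) := by
    linarith [add_one_le_exp (t / (x + 1) - 1)]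
  calc exp (-t) * t ^ x
      = exp (-t) * ((x + 1) ^ x * (t / (x + 1)) ^ x) := by
        rw [← mul_rpow (by positivity) (by positivity), mul_div_cancel₀ t (by positivity)]
    _ ≤ exp (-t) * ((x + 1) ^ x * exp (t / (x + 1) - 1) ^ x) := by gcongr
    _ = (x + 1) ^ x * exp (-t + (t / (x + 1) - 1) * x) := by
        rw [← exp_mul, exp_add]; ring
    _ = (x + 1) ^ x * exp (-(x + 1)⁻¹ * t + -x) := by
        congr 2; field_simp; ring
    _ = exp (-(x + 1)⁻¹ * t) * ((x + 1) ^ x * exp (-x)) := by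
        rw [exp_add]; ring

lemma Gamma_add_one_le {x : ℝ} (hx : 0 ≤ x) :
    Gamma (x + 1) ≤ (x + 1) ^ (x + 1) * exp (-x) := by
  have hneg : -(x + 1)⁻¹ < 0 := neg_neg_of_pos (by positivity)
  calc Gamma (x + 1) = ∫ t in Ioi 0, exp (-t) * t ^ (x + 1 - 1) :=
        Gamma_eq_integral (by positivity)
    _ ≤ ∫ t in Ioi 0, exp (-(x + 1)⁻¹ * t) * ((x + 1) ^ x * exp (-x)) := by
        refine setIntegral_mono_on (GammaIntegral_convergent (by positivity))
          ((integrableOn_exp_mul_Ioi hneg 0).mul_const _) measurableSet_Ioi fun t ht ↦ ?_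
        rw [add_sub_cancel_right]
        exact exp_neg_mul_rpow_le_exp_neg_inv_mul hx (le_of_lt ht)
    _ = (x + 1) ^ (x + 1) * exp (-x) := by
        rw [integral_mul_const, integral_exp_mul_Ioi hneg, rpow_add_one (by positivity)]
        simp only [mul_zero, exp_zero, neg_div_neg_eq, one_div, inv_inv]
        ring

lemma tendsto_rpow_inv_add_one_atTop :
    Tendsto (fun x : ℝ ↦ (x + 1) ^ x⁻¹) atTop (𝓝 1) := by
  have h := (tendsto_rpow_div_mul_add 1 1 (-1) zero_ne_one).comp
    (tendsto_atTop_add_const_right atTop (1 : ℝ) tendsto_id)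
  exact h.congr fun x ↦ by simp

theorem tendsto_Gamma_add_one_rpow_inv_div :
    Tendsto (fun x : ℝ ↦ Gamma (x + 1) ^ x⁻¹ / x) atTop (𝓝 (exp (-1))) := by
  have exp_root {x : ℝ} (hx : x ≠ 0) : exp (-x) ^ x⁻¹ = exp (-1) := by
    rw [← exp_mul, neg_mul, mul_inv_cancel₀ hx]
  have upper_tendsto : Tendsto (fun x : ℝ ↦ (1 + x⁻¹) * (x + 1) ^ x⁻¹ * exp (-1)) atTop
      (𝓝 (exp (-1))) := by
    simpa using
      ((tendsto_inv_atTop_zero.const_add 1).mul tendsto_rpow_inv_add_one_atTop).mul_const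
        (exp (-1))
  refine tendsto_of_tendsto_of_tendsto_of_le_of_le' tendsto_const_nhds upper_tendsto ?_ ?_
  · filter_upwards [eventually_gt_atTop 0] with x hx
    rw [le_div_iff₀ hx]
    calc exp (-1) * x = (x ^ x * exp (-x)) ^ x⁻¹ := by
          rw [mul_rpow (by positivity) (by positivity), rpow_rpow_inv hx.le hx.ne',
            exp_root hx.ne', mul_comm]
      _ ≤ Gamma (x + 1) ^ x⁻¹ := by
          gcongr
          exact rpow_self_mul_exp_neg_le_Gamma_add_one hx.le
  · filter_upwards [eventually_gt_atTop 0] with x hx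
    rw [div_le_iff₀ hx]
    calc Gamma (x + 1) ^ x⁻¹ ≤ ((x + 1) ^ (x + 1) * exp (-x)) ^ x⁻¹ := by
          gcongr
          exact Gamma_add_one_le hx.le
      _ = (x + 1) * (x + 1) ^ x⁻¹ * exp (-1) := by
          rw [mul_rpow (by positivity) (by positivity), exp_root hx.ne',
            rpow_add_one (by positivity), mul_rpow (by positivity) (by positivity),
            rpow_rpow_inv (by positivity) hx.ne']
      _ = (1 + x⁻¹) * (x + 1) ^ x⁻¹ * exp (-1) * x := by
          field_simp

end GammaAsymptotics

section Ellipsoid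

open Real

variable {ι : Type*} [Fintype ι]

lemma setOf_dotProduct_self_lt_eq_preimage_ball (r : ℝ) :
    {x : ι → ℝ | x ⬝ᵥ x < r} = WithLp.toLp 2 ⁻¹' Metric.ball (0 : EuclideanSpace ℝ ι) √r := by
  ext x
  simp only [Set.mem_ofPred_eq, Set.mem_preimage, mem_ball_zero_iff, EuclideanSpace.norm_eq,
    norm_eq_abs, sq_abs]
  rw [sqrt_lt_sqrt_iff (Finset.sum_nonneg fun i _ ↦ sq_nonneg (x i))]
  simp only [dotProduct, sq]

lemma volume_real_dotProduct_self_lt [Nonempty ι] {r : ℝ} (hr : 0 ≤ r) :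
    volume.real {x : ι → ℝ | x ⬝ᵥ x < r} =
      (π * r) ^ (Fintype.card ι / 2 : ℝ) / Gamma (Fintype.card ι / 2 + 1) := by
  have sqrt_pow {y : ℝ} (hy : 0 ≤ y) : √y ^ Fintype.card ι = y ^ (Fintype.card ι / 2 : ℝ) := by
    rw [← rpow_natCast, rpow_div_two_eq_sqrt _ hy]
  rw [setOf_dotProduct_self_lt_eq_preimage_ball, measureReal_def,
    (PiLp.volume_preserving_toLp ι).measure_preimage measurableSet_ball.nullMeasurableSet,
    EuclideanSpace.volume_ball, ENNReal.toReal_mul, ENNReal.toReal_pow,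
    ENNReal.toReal_ofReal (by positivity), ENNReal.toReal_ofReal (by positivity),
    sqrt_pow hr, sqrt_pow pi_nonneg, mul_rpow pi_nonneg hr]
  ring

lemma volume_real_dotProduct_transpose_mul_self_mulVec_lt [Nonempty ι] [DecidableEq ι]
    {R : Matrix ι ι ℝ} (hR : R.det ≠ 0) {r : ℝ} (hr : 0 ≤ r) :
    volume.real {x : ι → ℝ | x ⬝ᵥ ((Rᵀ * R) *ᵥ x) < r} =
      |R.det|⁻¹ * ((π * r) ^ (Fintype.card ι / 2 : ℝ) / Gamma (Fintype.card ι / 2 + 1)) := by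
  have preimage : {x : ι → ℝ | x ⬝ᵥ ((Rᵀ * R) *ᵥ x) < r} = toLin' R ⁻¹' {x | x ⬝ᵥ x < r} := by
    ext x
    simp only [Set.mem_ofPred_eq, Set.mem_preimage, toLin'_apply]
    rw [← mulVec_mulVec, dotProduct_mulVec, vecMul_transpose]
  have det_toLin' : LinearMap.det (toLin' R) = R.det := LinearMap.det_toLin' R
  rw [preimage, measureReal_def, Measure.addHaar_preimage_linearMap _ (det_toLin' ▸ hR),
    det_toLin', ENNReal.toReal_mul, ENNReal.toReal_ofReal (abs_nonneg _), abs_inv,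
    ← measureReal_def, volume_real_dotProduct_self_lt hr]

open scoped MatrixOrder Matrix.Norms.L2Operator in
theorem volume_real_dotProduct_mulVec_lt [Nonempty ι] [DecidableEq ι] {A : Matrix ι ι ℝ}
    (hA : A.PosDef) {r : ℝ} (hr : 0 ≤ r) :
    volume.real {x : ι → ℝ | x ⬝ᵥ (A *ᵥ x) < r} =
      (√A.det)⁻¹ * ((π * r) ^ (Fintype.card ι / 2 : ℝ) / Gamma (Fintype.card ι / 2 + 1)) := by
  have sqrt_symm : (CFC.sqrt A)ᵀ = CFC.sqrt A := by
    rw [← conjTranspose_eq_transpose_of_trivial]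
    exact (CFC.sqrt_nonneg A).posSemidef.isHermitian
  have sqrt_mul_sqrt : (CFC.sqrt A)ᵀ * CFC.sqrt A = A := by
    rw [sqrt_symm, CFC.sqrt_mul_sqrt_self A hA.posSemidef.nonneg]
  have det_sqrt : (CFC.sqrt A).det = √A.det := by
    rw [hA.posSemidef.det_sqrt, RCLike.sqrt_real]
  have det_pos : 0 < √A.det := sqrt_pos.mpr hA.det_pos
  have volume_sqrt := volume_real_dotProduct_transpose_mul_self_mulVec_lt
    (det_sqrt ▸ det_pos.ne') hr
  rwa [sqrt_mul_sqrt, det_sqrt, abs_of_pos det_pos] at volume_sqrt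

end Ellipsoid

section TypicalSet

open Real

variable {ι : Type*} [Fintype ι] [DecidableEq ι]

/-- The Gaussian typical set `T_η(S) = {a : |n⁻¹ aᵀ S⁻¹ a - 1| < η}` of a centred Gaussian vector
with covariance matrix `S`, where `n` is the cardinality of the index type `ι`. -/
def gaussianTypicalSet (η : ℝ) (S : Matrix ι ι ℝ) : Set (ι → ℝ) :=
  {a | |1 / (Fintype.card ι : ℝ) * (a ⬝ᵥ (S⁻¹ *ᵥ a)) - 1| < η}

variable [Nonempty ι] {η : ℝ} {S : Matrix ι ι ℝ}

lemma gaussianTypicalSet_ae_eq_ellipsoid (hη : 1 ≤ η) (hS : S.PosDef) :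
    gaussianTypicalSet η S =ᵐ[volume]
      {a : ι → ℝ | a ⬝ᵥ (S⁻¹ *ᵥ a) < Fintype.card ι * (1 + η)} := by
  have hn : (0 : ℝ) < Fintype.card ι := Nat.cast_pos.mpr Fintype.card_pos
  filter_upwards [Measure.ae_ne volume 0] with a ha
  have quadratic_pos : 0 < a ⬝ᵥ (S⁻¹ *ᵥ a) := by simpa using hS.inv.dotProduct_mulVec_pos ha
  have scaled_pos : 0 < 1 / (Fintype.card ι : ℝ) * (a ⬝ᵥ (S⁻¹ *ᵥ a)) := by positivity
  have upper : 1 / (Fintype.card ι : ℝ) * (a ⬝ᵥ (S⁻¹ *ᵥ a)) < 1 + η ↔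
      a ⬝ᵥ (S⁻¹ *ᵥ a) < Fintype.card ι * (1 + η) := by
    rw [one_div, inv_mul_lt_iff₀ hn]
  refine propext (Iff.trans (?_ : |_ - _| < η ↔ _) upper)
  rw [abs_lt]
  exact ⟨fun h ↦ by linarith [h.2], fun h ↦ ⟨by linarith, by linarith⟩⟩

theorem volume_real_gaussianTypicalSet (hη : 1 ≤ η) (hS : S.PosDef) :
    volume.real (gaussianTypicalSet η S) =
      √S.det * ((π * (Fintype.card ι * (1 + η))) ^ (Fintype.card ι / 2 : ℝ) /
        Gamma (Fintype.card ι / 2 + 1)) := by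
  rw [measureReal_congr (gaussianTypicalSet_ae_eq_ellipsoid hη hS),
    volume_real_dotProduct_mulVec_lt hS.inv (by positivity), det_nonsing_inv,
    Ring.inverse_eq_inv', sqrt_inv, inv_inv]

theorem volume_real_gaussianTypicalSet_div_rpow (hη : 1 ≤ η) (hS : S.PosDef) :
    (volume.real (gaussianTypicalSet η S) /
        ((2 * π * exp 1) ^ (Fintype.card ι / 2 : ℝ) * √S.det)) ^ (2 / Fintype.card ι : ℝ) =
      (1 + η) * exp (-1) * (Gamma (Fintype.card ι / 2 + 1) ^ (Fintype.card ι / 2 : ℝ)⁻¹ /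
        (Fintype.card ι / 2))⁻¹ := by
  rw [volume_real_gaussianTypicalSet hη hS, ← inv_div (Fintype.card ι : ℝ) 2]
  have hdet : 0 < √S.det := sqrt_pos.mpr hS.det_pos
  set x : ℝ := Fintype.card ι / 2 with hx
  have hx_pos : 0 < x := half_pos (Nat.cast_pos.mpr Fintype.card_pos)
  have hcard : (Fintype.card ι : ℝ) = 2 * x := by rw [hx]; ring
  have cancel_det : √S.det * ((π * (Fintype.card ι * (1 + η))) ^ x / Gamma (x + 1)) /
      ((2 * π * exp 1) ^ x * √S.det) = (x * (1 + η) * exp (-1)) ^ x / Gamma (x + 1) := by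
    have base : π * (2 * x * (1 + η)) = 2 * π * exp 1 * (x * (1 + η) * exp (-1)) := by
      rw [exp_neg]; field_simp
    rw [hcard, base, mul_rpow (by positivity) (by positivity)]
    field_simp
  rw [cancel_det, div_rpow (by positivity) (by positivity),
    rpow_rpow_inv (by positivity) hx_pos.ne']
  field_simp

end TypicalSet

/-- For `η ≥ 1` and any sequence `Σ_n` of `n × n` real positive-definite matrices,
`( Vol(T_η^{(n)}(Σ_n)) / ((2πe)^{n/2} (det Σ_n)^{1/2}) )^{2/n} → 1 + η` as `n → ∞`,
where `T_η^{(n)}(Σ) = {a ∈ ℝⁿ : |(1/n)·aᵀΣ⁻¹a − 1| < η}`. -/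
theorem stmt8 (η : ℝ) (hη : 1 ≤ η)
    (S : (n : ℕ) → Matrix (Fin n) (Fin n) ℝ) (hS : ∀ n, (S n).PosDef) :
    Filter.Tendsto (fun n : ℕ =>
      ((volume {a : Fin n → ℝ | |(1 / (n : ℝ)) * (a ⬝ᵥ ((S n)⁻¹ *ᵥ a)) - 1| < η}).toReal
        / ((2 * Real.pi * Real.exp 1) ^ ((n : ℝ) / 2) * Real.sqrt (S n).det))
        ^ (2 / (n : ℝ)))
      Filter.atTop (nhds (1 + η)) := by
  have half_tendsto : Filter.Tendsto (fun n : ℕ ↦ (n : ℝ) / 2) Filter.atTop Filter.atTop :=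
    tendsto_natCast_atTop_atTop.atTop_div_const two_pos
  have gamma_tendsto := ((tendsto_Gamma_add_one_rpow_inv_div.comp half_tendsto).inv₀
    (Real.exp_ne_zero (-1))).const_mul ((1 + η) * Real.exp (-1))
  rw [mul_inv_cancel_right₀ (Real.exp_ne_zero (-1))] at gamma_tendsto
  refine gamma_tendsto.congr' ?_
  filter_upwards [Filter.eventually_gt_atTop 0] with n hn
  have : Nonempty (Fin n) := ⟨⟨0, hn⟩⟩
  simpa only [Function.comp_apply, gaussianTypicalSet, measureReal_def, Fintype.card_fin]
    using (volume_real_gaussianTypicalSet_div_rpow hη (hS n)).symm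
end

section
/- Let H_c and E be m×n real matrices with spectral norms ‖H_c‖ ≤ β and ‖E‖ ≤ ρ, and suppose the smallest eigenvalue of H_cᵀH_c is at least α² for some α > 0. Let Σ be an n×n real positive-definite matrix, set H := H_c + E, and define φ := ρ(ρ + 2β) · λ_max(Σ) / (1 + α² · λ_min(Σ)). If φ < 1, then det(I_m + HΣHᵀ) ≥ (1 − φ)ⁿ · det(I_m + H_cΣH_cᵀ). -/
open Matrix

/-- The spectral (operator) norm of a real matrix:
`‖M‖ = max over vectors x with ‖x‖₂ ≤ 1 of ‖M x‖₂`. -/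
noncomputable def specNorm {m n : ℕ} (M : Matrix (Fin m) (Fin n) ℝ) : ℝ :=
  sSup {c : ℝ | ∃ x : Fin n → ℝ,
    Real.sqrt (∑ i, x i ^ 2) ≤ 1 ∧ c = Real.sqrt (∑ i, (M *ᵥ x) i ^ 2)}

/-!
With `H = H_c + E`, the operator norm of `HᴴH - H_cᴴH_c = EᴴE + H_cᴴE + EᴴH_c` is at most
`κ = ρ(ρ + 2β)`, so `HᴴH ≥ H_cᴴH_c - κ` in the Loewner order. Let `R` be the positive square root
of `Σ`. Conjugating by `R` loses at most `κ Σ ≤ κ λ_max(Σ)`, while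
`1 + R H_cᴴH_c R ≥ 1 + α² Σ ≥ 1 + α² λ_min(Σ)`. The loss is therefore at most
`φ (1 + R H_cᴴH_c R)`, that is, `(1 - φ)(1 + R H_cᴴH_c R) ≤ 1 + R HᴴH R`. The determinant is
monotone on positive semidefinite matrices, and `det(1 + HΣHᴴ) = det(1 + R HᴴH R)`.
-/

open scoped Matrix.Norms.L2Operator in
theorem specNorm_eq_l2_opNorm {m n : ℕ} (M : Matrix (Fin m) (Fin n) ℝ) : specNorm M = ‖M‖ := by
  rw [specNorm, l2_opNorm_def, ← ContinuousLinearMap.sSup_unitClosedBall_eq_norm]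
  congr 1
  ext c
  simp [(WithLp.toLp_surjective 2).exists, EuclideanSpace.norm_eq, eq_comm]

section OrderedStarAlgebra

variable {A : Type*} [Ring A] [StarRing A] [PartialOrder A] [StarOrderedRing A]
  [Algebra ℝ A] [StarModule ℝ A]

theorem one_sub_smul_one_add_conjugate_le {r a b : A} {α κ ℓ L φ : ℝ} (hr : IsSelfAdjoint r)
    (hα : 0 ≤ α) (hκ : 0 ≤ κ) (hℓ : 0 ≤ ℓ) (hL : 0 ≤ L)
    (hℓr : algebraMap ℝ A ℓ ≤ r * r) (hrL : r * r ≤ algebraMap ℝ A L)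
    (ha : algebraMap ℝ A α ≤ a) (hab : a - algebraMap ℝ A κ ≤ b)
    (hφ : κ * L ≤ φ * (1 + α * ℓ)) :
    (1 - φ) • (1 + r * a * r) ≤ 1 + r * b * r := by
  have hφ₀ : 0 ≤ φ :=
    nonneg_of_mul_nonneg_left ((mul_nonneg hκ hL).trans hφ) (by positivity)
  simp only [Algebra.algebraMap_eq_smul_one] at *
  have hconj : r * a * r - κ • (r * r) ≤ r * b * r := by
    simpa [mul_sub, sub_mul] using hr.conjugate_le_conjugate hab
  have hlower : (1 + α * ℓ) • (1 : A) ≤ 1 + r * a * r :=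
    calc (1 + α * ℓ) • (1 : A) = 1 + α • ℓ • 1 := by rw [add_smul, one_smul, mul_smul]
      _ ≤ 1 + α • (r * r) := by gcongr
      _ ≤ 1 + r * a * r := by
        gcongr
        simpa using hr.conjugate_le_conjugate ha
  have hloss : κ • (r * r) ≤ φ • (1 + r * a * r) :=
    calc κ • (r * r) ≤ κ • L • (1 : A) := by gcongr
      _ = (κ * L) • (1 : A) := smul_smul ..
      _ ≤ (φ * (1 + α * ℓ)) • (1 : A) := by gcongr
      _ = φ • (1 + α * ℓ) • (1 : A) := mul_smul ..
      _ ≤ φ • (1 + r * a * r) := by gcongr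
  calc (1 - φ) • (1 + r * a * r) = (1 + r * a * r) - φ • (1 + r * a * r) := by
        rw [sub_smul, one_smul]
    _ ≤ (1 + r * a * r) - κ • (r * r) := by gcongr
    _ = 1 + (r * a * r - κ • (r * r)) := add_sub_assoc ..
    _ ≤ 1 + r * b * r := by gcongr

end OrderedStarAlgebra

section RCLikeMatrix

open scoped MatrixOrder ComplexOrder Matrix.Norms.L2Operator

variable {𝕜 m n : Type*} [RCLike 𝕜] [Fintype m] [Fintype n] [DecidableEq n]

theorem algebraMap_le_iff_le_eigenvalues {A : Matrix n n 𝕜} (hA : A.IsHermitian) {c : ℝ} :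
    algebraMap ℝ _ c ≤ A ↔ ∀ i, c ≤ hA.eigenvalues i := by
  rw [algebraMap_le_iff_le_spectrum (ha := hA), hA.spectrum_real_eq_range_eigenvalues,
    Set.forall_mem_range]

theorem le_algebraMap_iff_eigenvalues_le {A : Matrix n n 𝕜} (hA : A.IsHermitian) {c : ℝ} :
    A ≤ algebraMap ℝ _ c ↔ ∀ i, hA.eigenvalues i ≤ c := by
  rw [le_algebraMap_iff_spectrum_le (ha := hA), hA.spectrum_real_eq_range_eigenvalues,
    Set.forall_mem_range]

theorem le_algebraMap_l2_opNorm {A : Matrix n n 𝕜} (hA : A.IsHermitian) :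
    A ≤ algebraMap ℝ _ ‖A‖ := by
  cases subsingleton_or_nontrivial (Matrix n n 𝕜)
  · exact (Subsingleton.elim _ _).le
  refine le_algebraMap_of_spectrum_le (ha := hA) fun r hr => (Real.le_norm_self r).trans ?_
  have hr𝕜 : algebraMap ℝ 𝕜 r ∈ spectrum 𝕜 A := (spectrum.algebraMap_mem_iff 𝕜).mpr hr
  simpa using spectrum.norm_le_norm_of_mem hr𝕜

theorem conjTranspose_mul_self_sub_le_of_add (A E : Matrix m n 𝕜) :
    Aᴴ * A - algebraMap ℝ _ (‖E‖ * (‖E‖ + 2 * ‖A‖)) ≤ (A + E)ᴴ * (A + E) := by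
  classical
  have hdiff : Aᴴ * A - (A + E)ᴴ * (A + E) = -(Eᴴ * E + Aᴴ * E + Eᴴ * A) := by
    rw [conjTranspose_add, Matrix.add_mul, Matrix.mul_add, Matrix.mul_add]
    abel
  have hherm : (Aᴴ * A - (A + E)ᴴ * (A + E)).IsHermitian :=
    (isHermitian_conjTranspose_mul_self A).sub (isHermitian_conjTranspose_mul_self (A + E))
  have hnorm : ‖Aᴴ * A - (A + E)ᴴ * (A + E)‖ ≤ ‖E‖ * (‖E‖ + 2 * ‖A‖) :=
    calc ‖Aᴴ * A - (A + E)ᴴ * (A + E)‖ = ‖Eᴴ * E + Aᴴ * E + Eᴴ * A‖ := by rw [hdiff, norm_neg]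
      _ ≤ ‖Eᴴ * E‖ + ‖Aᴴ * E‖ + ‖Eᴴ * A‖ := norm_add₃_le
      _ ≤ ‖Eᴴ‖ * ‖E‖ + ‖Aᴴ‖ * ‖E‖ + ‖Eᴴ‖ * ‖A‖ := by gcongr <;> exact l2_opNorm_mul _ _
      _ = ‖E‖ * (‖E‖ + 2 * ‖A‖) := by simp only [l2_opNorm_conjTranspose]; ring
  rw [sub_le_comm]
  exact (le_algebraMap_l2_opNorm hherm).trans (algebraMap_mono _ hnorm)

theorem one_le_det {A : Matrix n n 𝕜} (hA : 1 ≤ A) : 1 ≤ A.det := by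
  have hherm : A.IsHermitian := (zero_le_one.trans hA).posSemidef.isHermitian
  have hev : ∀ i, 1 ≤ hherm.eigenvalues i :=
    (algebraMap_le_iff_le_eigenvalues hherm).mp (by simpa using hA)
  rw [hherm.det_eq_prod_eigenvalues]
  exact_mod_cast Finset.one_le_prod fun i _ => hev i

theorem det_le_det_of_nonneg_of_le {A B : Matrix n n 𝕜} (hA : 0 ≤ A) (hAB : A ≤ B) :
    A.det ≤ B.det := by
  by_cases hdet : A.det = 0
  · exact hdet ▸ (hA.trans hAB).posSemidef.det_nonneg
  obtain ⟨X, hX, rfl⟩ := CStarAlgebra.isStrictlyPositive_iff_eq_star_mul_self.mp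
    (hA.posSemidef.posDef_iff_det_ne_zero.mpr hdet).isStrictlyPositive
  obtain ⟨Y, hXY⟩ := hX.exists_right_inv
  have hYX : Y * X = 1 := mul_eq_one_comm.mp hXY
  have hC : 1 ≤ star Y * B * Y :=
    calc 1 = star (X * Y) * (X * Y) := by rw [hXY, star_one, one_mul]
      _ = star Y * (star X * X) * Y := by simp only [star_mul, mul_assoc]
      _ ≤ star Y * B * Y := star_left_conjugate_le_conjugate hAB Y
  calc (star X * X).det ≤ (star X * X).det * (star Y * B * Y).det :=
        le_mul_of_one_le_right hA.posSemidef.det_nonneg (one_le_det hC)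
    _ = (star (Y * X) * B * (Y * X)).det := by simp only [star_mul, det_mul]; ring
    _ = B.det := by rw [hYX, star_one, one_mul, mul_one]

variable [DecidableEq m]

theorem det_one_add_mul_mul_conjTranspose (H : Matrix m n 𝕜) {S : Matrix n n 𝕜}
    (hS : S.PosSemidef) :
    (1 + H * S * Hᴴ).det = (1 + CFC.sqrt S * (Hᴴ * H) * CFC.sqrt S).det :=
  calc (1 + H * S * Hᴴ).det = (1 + (H * CFC.sqrt S) * (CFC.sqrt S * Hᴴ)).det := by
        rw [← Matrix.mul_assoc, Matrix.mul_assoc H (CFC.sqrt S), CFC.sqrt_mul_sqrt_self S hS.nonneg]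
    _ = (1 + CFC.sqrt S * Hᴴ * (H * CFC.sqrt S)).det := det_one_add_mul_comm _ _
    _ = (1 + CFC.sqrt S * (Hᴴ * H) * CFC.sqrt S).det := by simp only [Matrix.mul_assoc]

theorem pow_mul_det_one_add_le_det_one_add {k : Type*} [Fintype k] [DecidableEq k]
    {H : Matrix m n 𝕜} {K : Matrix k n 𝕜} {S : Matrix n n 𝕜} {α κ ℓ L φ : ℝ}
    (hS : S.PosSemidef) (hα : 0 ≤ α) (hκ : 0 ≤ κ) (hℓ : 0 ≤ ℓ) (hL : 0 ≤ L)
    (hℓS : algebraMap ℝ _ ℓ ≤ S) (hSL : S ≤ algebraMap ℝ _ L)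
    (hH : algebraMap ℝ _ α ≤ Hᴴ * H) (hHK : Hᴴ * H - algebraMap ℝ _ κ ≤ Kᴴ * K)
    (hφ : κ * L ≤ φ * (1 + α * ℓ)) (hφ₁ : φ ≤ 1) :
    ((1 - φ : ℝ) : 𝕜) ^ Fintype.card n * (1 + H * S * Hᴴ).det ≤ (1 + K * S * Kᴴ).det := by
  rw [det_one_add_mul_mul_conjTranspose H hS, det_one_add_mul_mul_conjTranspose K hS]
  set R := CFC.sqrt S
  have hR : IsSelfAdjoint R := (CFC.sqrt_nonneg S).isSelfAdjoint
  have hRR : R * R = S := CFC.sqrt_mul_sqrt_self S hS.nonneg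
  have hle : (1 - φ) • (1 + R * (Hᴴ * H) * R) ≤ 1 + R * (Kᴴ * K) * R :=
    one_sub_smul_one_add_conjugate_le hR hα hκ hℓ hL (hRR ▸ hℓS) (hRR ▸ hSL) hH hHK hφ
  have hnonneg : 0 ≤ (1 - φ) • (1 + R * (Hᴴ * H) * R) :=
    smul_nonneg (sub_nonneg.mpr hφ₁) (add_nonneg zero_le_one
      (hR.conjugate_nonneg (posSemidef_conjTranspose_mul_self H).nonneg))
  calc ((1 - φ : ℝ) : 𝕜) ^ Fintype.card n * (1 + R * (Hᴴ * H) * R).det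
      = ((1 - φ) • (1 + R * (Hᴴ * H) * R)).det := by
        rw [RCLike.real_smul_eq_coe_smul (K := 𝕜), det_smul]
    _ ≤ (1 + R * (Kᴴ * K) * R).det := det_le_det_of_nonneg_of_le hnonneg hle

theorem stmt9_general (Hc E : Matrix m n 𝕜) {β ρ α φ : ℝ} (hHc : ‖Hc‖ ≤ β) (hE : ‖E‖ ≤ ρ)
    (heig : ∀ i, α ^ 2 ≤ (isHermitian_conjTranspose_mul_self Hc).eigenvalues i)
    {S : Matrix n n 𝕜} (hS : S.PosSemidef)
    (hφdef : φ = ρ * (ρ + 2 * β) * (⨆ i, hS.isHermitian.eigenvalues i)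
        / (1 + α ^ 2 * (⨅ i, hS.isHermitian.eigenvalues i)))
    (hφ : φ ≤ 1) :
    ((1 - φ : ℝ) : 𝕜) ^ Fintype.card n * (1 + Hc * S * Hcᴴ).det
      ≤ (1 + (Hc + E) * S * (Hc + E)ᴴ).det := by
  set L := ⨆ i, hS.isHermitian.eigenvalues i
  set ℓ := ⨅ i, hS.isHermitian.eigenvalues i
  have hℓ : 0 ≤ ℓ := Real.iInf_nonneg hS.eigenvalues_nonneg
  have hL : 0 ≤ L := Real.iSup_nonneg hS.eigenvalues_nonneg
  have hℓS : algebraMap ℝ _ ℓ ≤ S := (algebraMap_le_iff_le_eigenvalues hS.isHermitian).mpr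
    (ciInf_le (Set.finite_range _).bddBelow)
  have hSL : S ≤ algebraMap ℝ _ L := (le_algebraMap_iff_eigenvalues_le hS.isHermitian).mpr
    (le_ciSup (Set.finite_range _).bddAbove)
  have hρ : 0 ≤ ρ := (norm_nonneg E).trans hE
  have hloss : ‖E‖ * (‖E‖ + 2 * ‖Hc‖) * L ≤ φ * (1 + α ^ 2 * ℓ) := by
    rw [hφdef, div_mul_cancel₀ _ (by positivity)]
    gcongr
  exact pow_mul_det_one_add_le_det_one_add hS (sq_nonneg α) (by positivity) hℓ hL hℓS hSL
    ((algebraMap_le_iff_le_eigenvalues _).mpr heig) (conjTranspose_mul_self_sub_le_of_add Hc E)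
    hloss hφ

end RCLikeMatrix

/-- Perturbation bound on determinants: if `‖H_c‖ ≤ β`, `‖E‖ ≤ ρ`,
`λ_min(H_cᵀH_c) ≥ α²` with `α > 0`, `Σ ≻ 0`, `H = H_c + E` and
`φ = ρ(ρ+2β)·λ_max(Σ)/(1+α²·λ_min(Σ)) < 1`, then
`det(I_m + HΣHᵀ) ≥ (1−φ)ⁿ · det(I_m + H_cΣH_cᵀ)`. -/
theorem stmt9 (m n : ℕ) (Hc E : Matrix (Fin m) (Fin n) ℝ) (β ρ α : ℝ) (hα : 0 < α)
    (hHc : specNorm Hc ≤ β) (hE : specNorm E ≤ ρ)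
    (hsym : (Hcᵀ * Hc).IsHermitian)
    (heig : ∀ i, α ^ 2 ≤ hsym.eigenvalues i)
    (S : Matrix (Fin n) (Fin n) ℝ) (hS : S.PosDef)
    (φ : ℝ)
    (hφdef : φ = ρ * (ρ + 2 * β) * (⨆ i, hS.isHermitian.eigenvalues i)
        / (1 + α ^ 2 * (⨅ i, hS.isHermitian.eigenvalues i)))
    (hφ : φ < 1) :
    (1 - φ) ^ n * ((1 : Matrix (Fin m) (Fin m) ℝ) + Hc * S * Hcᵀ).det
      ≤ ((1 : Matrix (Fin m) (Fin m) ℝ) + (Hc + E) * S * (Hc + E)ᵀ).det := by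
  rw [specNorm_eq_l2_opNorm] at hHc hE
  simpa using stmt9_general Hc E hHc hE heig hS.posSemidef hφdef hφ.le
end
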